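/- arXiv:1207.4331 — 3 statements merged into one kernel-verified Lean document; each statement's English description precedes it below -/
import Mathlib

section
/- For a real number a and a natural number j, define g_j^a(x) = \frac{(-1)^j}{j!} \prod_{i=0}^{j-1} (x + (a+i)^2). For real a, b, c, d, define the Wilson polynomials w_n^{a,b,c,d}(x) = \sum_{j=0}^n \frac{(a+b+j)_{n-j} (a+c+j)_{n-j} (a+d+j)_{n-j}}{(n-j)! \, (n+a+b+c+d-1+j)_{n-j}} \, g_j^a(x) (well defined whenever the Pochhammer symbols in the denominators are nonzero), and the normalized Casorati Wilson determinant W^{a,b,c,d}_{n,m,x} = \det\big( w^{a,b,c,d}_{m+j-1}(-(x+i-1)^2) \big)_{i,j=1}^n \big/ \prod_{l=1}^{n-1} (2x+l)_l. Let n, m be natural numbers, write h = (n+m)/2, and let x, a, b, c, d be real numbers such that a+b+c+d is not an integer, \prod_{l=1}^{n-1} (2(x+a-h)+l)_l \ne 0 and \prod_{l=1}^{m-1} (2(-x-a+1)+l)_l \ne 0. Then: W^{a-h, \, b-h, \, c-h, \, d-h}_{n, m, \, x+a-h} = W^{-d+1, \, -b+1, \, -a+1, \, -c+1}_{m, n,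 \, -x-a+1}. -/
/-- The Pochhammer symbol `(y)_l = y (y+1) ⋯ (y+l-1)`. -/
noncomputable def poch (y : ℝ) (l : ℕ) : ℝ := ∏ k ∈ Finset.range l, (y + k)

/-- The polynomial `g_j^a(x) = ((-1)^j/j!) ∏_{i=0}^{j-1} (x + (a+i)^2)`. -/
noncomputable def gpol (a : ℝ) (j : ℕ) (x : ℝ) : ℝ :=
  ((-1 : ℝ) ^ j / j.factorial) * ∏ i ∈ Finset.range j, (x + (a + i) ^ 2)

/-- The Wilson polynomial `w_n^{a,b,c,d}(x)`. -/
noncomputable def wilson (a b c d : ℝ) (n : ℕ) (x : ℝ) : ℝ :=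
  ∑ j ∈ Finset.range (n + 1),
    (poch (a + b + j) (n - j) * poch (a + c + j) (n - j) * poch (a + d + j) (n - j) /
      ((n - j).factorial * poch (n + a + b + c + d - 1 + j) (n - j))) *
    gpol a j x

/-- The normalized Casorati Wilson determinant `W^{a,b,c,d}_{n,m,x}`. -/
noncomputable def wilsonCasorati (a b c d : ℝ) (n m : ℕ) (x : ℝ) : ℝ :=
  Matrix.det (Matrix.of fun i j : Fin n =>
    wilson a b c d (m + (j : ℕ)) (-(x + (i : ℕ)) ^ 2)) /
  ∏ l ∈ Finset.Icc 1 (n - 1), poch (2 * x + l) l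

/-! Let `H` be the infinite unitriangular matrix whose `i`-th row lists the values of the Wilson
polynomials with parameters raised by `i / 2` at `-(x + i / 2)^2`. Expanding in the Newton basis
`g_p^x`, the matrix of values at the points `-(x + i)^2` is a lower triangular matrix times `H`,
and the determinant of the triangular factor is the normalizing product; so the normalized Casorati
determinant is the minor of `H` in the upper right corner. By the Pfaff–Saalschütz formula `H` is
invariant under permutations of the parameters, and `H⁻¹` is again of the form `H`, up to signs and
reversal of the indices, for reflected parameters. Jacobi's complementary minor identity, which
turns the `n × n` corner of `H` into the `m × m` corner of `H⁻¹`, is then the symmetry. -/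

open Finset

section Pochhammer

lemma poch_zero (y : ℝ) : poch y 0 = 1 := prod_range_zero _

lemma poch_succ (y : ℝ) (l : ℕ) : poch y (l + 1) = poch y l * (y + l) := prod_range_succ _ _

lemma poch_add (y : ℝ) (k l : ℕ) : poch y (k + l) = poch y k * poch (y + k) l := by
  simp only [poch, prod_range_add, Nat.cast_add, add_assoc]

lemma poch_succ' (y : ℝ) (l : ℕ) : poch y (l + 1) = y * poch (y + 1) l := by
  simp [add_comm l 1, poch_add, poch_succ, poch_zero]

lemma mul_poch_add_one (y : ℝ) (l : ℕ) : y * poch (y + 1) l = poch y l * (y + l) := by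
  rw [← poch_succ', poch_succ]

lemma poch_zero_left (l : ℕ) : poch 0 l = if l = 0 then 1 else 0 := by
  rcases l with - | l
  · simp [poch_zero]
  · simp [poch_succ']

lemma poch_one_left (l : ℕ) : poch 1 l = l.factorial := by
  induction l with
  | zero => simp [poch_zero]
  | succ l ih => rw [poch_succ, ih, Nat.factorial_succ]; push_cast; ring

lemma poch_reflect (y : ℝ) (l : ℕ) : poch (1 - y - l) l = (-1) ^ l * poch y l := by
  induction l with
  | zero => simp [poch_zero]
  | succ l ih =>
    rw [poch_succ', poch_succ y, pow_succ,
      show 1 - y - ((l + 1 : ℕ) : ℝ) + 1 = 1 - y - l by push_cast; ring, ih]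
    push_cast
    ring

lemma poch_ne_zero {y : ℝ} (hy : ∀ z : ℤ, y ≠ z) (l : ℕ) : poch y l ≠ 0 :=
  prod_ne_zero_iff.mpr fun k _ h => hy (-k) (by push_cast; linarith)

@[fun_prop]
lemma continuous_poch (l : ℕ) : Continuous fun y => poch y l := by
  unfold poch
  fun_prop

end Pochhammer

section Saalschutz

/-- The terminating hypergeometric sum `₃F₂(-n, α, ε; β, γ; 1)`, multiplied by
`(β)_n (γ)_n / n!` so that it is polynomial in the parameters. -/
noncomputable def saalschutzSum (α ε β γ : ℝ) (n : ℕ) : ℝ :=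
  ∑ p ∈ antidiagonal n, (-1) ^ p.1 / (p.1.factorial * p.2.factorial) *
    (poch α p.1 * poch ε p.1 * (poch (β + p.1) p.2 * poch (γ + p.1) p.2))

lemma succ_mul_sum_antidiagonal_succ {R : Type*} [CommSemiring R] (f : ℕ → ℕ → R) (n : ℕ) :
    ((n : R) + 1) * ∑ p ∈ antidiagonal (n + 1), f p.1 p.2 =
      ∑ p ∈ antidiagonal n, ((p.1 + 1) * f (p.1 + 1) p.2 + (p.2 + 1) * f p.1 (p.2 + 1)) := by
  have hsplit : ((n : R) + 1) * ∑ p ∈ antidiagonal (n + 1), f p.1 p.2 =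
      ∑ p ∈ antidiagonal (n + 1), (p.1 : R) * f p.1 p.2 +
        ∑ p ∈ antidiagonal (n + 1), (p.2 : R) * f p.1 p.2 := by
    rw [mul_sum, ← sum_add_distrib]
    refine sum_congr rfl fun p hp => ?_
    rw [← add_mul, ← Nat.cast_add, mem_antidiagonal.mp hp, Nat.cast_succ]
  rw [hsplit, Nat.sum_antidiagonal_succ, Nat.sum_antidiagonal_succ', sum_add_distrib]
  simp

lemma succ_mul_saalschutzSum_succ (α ε β γ : ℝ) (n : ℕ) :
    (n + 1) * saalschutzSum α ε β γ (n + 1) =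
      ∑ p ∈ antidiagonal n, (-1) ^ p.1 / (p.1.factorial * p.2.factorial) *
        (poch α p.1 * poch ε p.1 * (poch (β + 1 + p.1) p.2 * poch (γ + 1 + p.1) p.2)) *
        ((β + p.1) * (γ + p.1) - (α + p.1) * (ε + p.1)) := by
  unfold saalschutzSum
  rw [succ_mul_sum_antidiagonal_succ fun i j => (-1) ^ i / ((i.factorial : ℝ) * j.factorial) *
    (poch α i * poch ε i * (poch (β + i) j * poch (γ + i) j))]
  refine sum_congr rfl fun ⟨i, j⟩ _ => ?_
  simp only [poch_succ α, poch_succ ε, poch_succ' (β + i), poch_succ' (γ + i), pow_succ,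
    Nat.factorial_succ, Nat.cast_mul, Nat.cast_add, Nat.cast_one, add_right_comm _ (1 : ℝ),
    ← add_assoc]
  field_simp
  ring

lemma saalschutzSum_contiguous (α ε β γ : ℝ) (n : ℕ) :
    (ε - α) * ((n + 1) * saalschutzSum α ε β γ (n + 1)) =
      (β - α) * (γ - α) * (ε * saalschutzSum α (ε + 1) (β + 1) (γ + 1) n) -
        (β - ε) * (γ - ε) * (α * saalschutzSum (α + 1) ε (β + 1) (γ + 1) n) := by
  rw [succ_mul_saalschutzSum_succ]
  simp only [saalschutzSum, mul_sum, ← sum_sub_distrib]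
  refine sum_congr rfl fun ⟨i, j⟩ _ => ?_
  have hε := mul_poch_add_one ε i
  have hα := mul_poch_add_one α i
  dsimp only
  set w : ℝ := (-1) ^ i / (i.factorial * j.factorial) *
    (poch (β + 1 + i) j * poch (γ + 1 + i) j)
  linear_combination (β - ε) * (γ - ε) * w * poch ε i * hα - (β - α) * (γ - α) * w * poch α i * hε

/-- The **Pfaff–Saalschütz summation formula**. -/
theorem saalschutzSum_eq {α ε β γ : ℝ} {n : ℕ} (h : α + ε + 1 = β + γ + n) :
    saalschutzSum α ε β γ n = poch (β - α) n * poch (γ - α) n / n.factorial := by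
  induction n generalizing α ε β γ with
  | zero => simp [saalschutzSum, poch_zero]
  | succ n ih =>
    obtain rfl : ε = β + γ + n - α := by push_cast at h; linarith
    clear h
    have of_ne (δ : ℝ) (hne : δ ≠ 2 * α - β - n) :
        saalschutzSum α (β + δ + n - α) β δ (n + 1) =
          poch (β - α) (n + 1) * poch (δ - α) (n + 1) / (n + 1).factorial := by
      have hcont := saalschutzSum_contiguous α (β + δ + n - α) β δ n
      rw [ih (by ring), ih (by ring), show β + 1 - (α + 1) = β - α by ring,
        show δ + 1 - (α + 1) = δ - α by ring, show β + 1 - α = β - α + 1 by ring,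
        show δ + 1 - α = δ - α + 1 by ring] at hcont
      have hβ := mul_poch_add_one (β - α) n
      have hδ := mul_poch_add_one (δ - α) n
      have hne' : β + δ + n - α - α ≠ 0 := fun h0 => hne (by linarith)
      rw [poch_succ, poch_succ, Nat.factorial_succ]
      push_cast
      field_simp at hcont ⊢
      refine mul_left_cancel₀ hne' ?_
      linear_combination hcont + (β + δ + n - α) * (δ - α) * poch (δ - α + 1) n * hβ +
        (β + δ + n - α) * poch (β - α) n * (β - α + n) * hδ
    -- The contiguous relation only determines the sum when `ε ≠ α`; both sides are continuous.
    exact congr_fun (Continuous.ext_on (dense_compl_singleton (2 * α - β - n))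
      (by unfold saalschutzSum; fun_prop) (by fun_prop) of_ne) γ

end Saalschutz

section IncidenceAlgebra

variable {R : Type*}

/-- The element of the incidence algebra of `ℕ`, i.e. the infinite upper triangular matrix, whose
entry in row `i` on the `r`-th diagonal, at position `(i, i + r)`, is `f i r`. -/
def ofDiagonals [Zero R] (f : ℕ → ℕ → R) : IncidenceAlgebra R ℕ where
  toFun i k := if i ≤ k then f i (k - i) else 0
  eq_zero_of_not_le' _ _ h := if_neg h

lemma ofDiagonals_apply_add [Zero R] (f : ℕ → ℕ → R) (i r : ℕ) :
    ofDiagonals f i (i + r) = f i r := by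
  simp [ofDiagonals]

lemma ofDiagonals_mul [NonUnitalNonAssocSemiring R] (f g : ℕ → ℕ → R) :
    ofDiagonals f * ofDiagonals g =
      ofDiagonals fun i n => ∑ p ∈ antidiagonal n, f i p.1 * g (i + p.1) p.2 := by
  ext i k hik
  obtain ⟨n, rfl⟩ := Nat.exists_eq_add_of_le hik
  rw [ofDiagonals_apply_add, IncidenceAlgebra.mul_apply, ← Ico_add_one_right_eq_Icc,
    sum_Ico_eq_sum_range, Nat.sum_antidiagonal_eq_sum_range_succ_mk, add_assoc,
    Nat.add_sub_cancel_left]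
  refine sum_congr rfl fun p hp => ?_
  obtain ⟨q, rfl⟩ := Nat.exists_eq_add_of_le (mem_range_succ_iff.mp hp)
  rw [ofDiagonals_apply_add, ← add_assoc, ofDiagonals_apply_add, Nat.add_sub_cancel_left]

lemma ofDiagonals_eq_one [Zero R] [One R] {f : ℕ → ℕ → R}
    (hf : ∀ i r, f i r = if r = 0 then 1 else 0) : ofDiagonals f = 1 := by
  ext i k hik
  obtain ⟨r, rfl⟩ := Nat.exists_eq_add_of_le hik
  simp [ofDiagonals_apply_add, hf]

lemma mul_apply_eq_sum_fin [NonUnitalNonAssocSemiring R] (f g : IncidenceAlgebra R ℕ) {N : ℕ}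
    (i k : ℕ) (h : ∀ j, N ≤ j → f i j * g j k = 0) :
    (f * g) i k = ∑ j : Fin N, f i j * g j k := by
  rw [Fin.sum_univ_eq_sum_range (fun j => f i j * g j k), IncidenceAlgebra.mul_apply]
  have hIcc (j : ℕ) (hj : j ∉ Icc i k) : f i j * g j k = 0 := by
    by_cases hij : i ≤ j
    · rw [g.apply_eq_zero_of_not_le fun hjk => hj (mem_Icc.mpr ⟨hij, hjk⟩), mul_zero]
    · rw [f.apply_eq_zero_of_not_le hij, zero_mul]
  exact sum_congr_of_eq_on_inter (fun j _ hj => h j (by simpa using hj)) (fun j _ hj => hIcc j hj)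
    fun _ _ _ => rfl

end IncidenceAlgebra

section Newton

/-- The change of basis between the Newton bases `g_p^x` and `g_n^a`: the polynomial
`g_n^a` is the combination of the `g_p^x` with coefficients `newtonArray a x p n`. -/
noncomputable def newtonArray (a x : ℝ) : IncidenceAlgebra ℝ ℕ :=
  ofDiagonals fun i r => gpol (a + i / 2) r (-(x + i / 2) ^ 2)

lemma gpol_neg_sq (a x : ℝ) (k : ℕ) :
    gpol a k (-x ^ 2) = (-1) ^ k / k.factorial * (poch (a - x) k * poch (a + x) k) := by
  unfold gpol poch
  rw [← prod_mul_distrib]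
  exact congr_arg _ (prod_congr rfl fun i _ => by ring)

lemma gpol_add_half_neg_sq (a x t : ℝ) (r : ℕ) :
    gpol (a + t / 2) r (-(x + t / 2) ^ 2) =
      (-1) ^ r / r.factorial * (poch (a - x) r * poch (a + x + t) r) := by
  rw [gpol_neg_sq]
  ring_nf

lemma newtonArray_self (a : ℝ) : newtonArray a a = 1 :=
  ofDiagonals_eq_one fun i r => by
    rw [gpol_add_half_neg_sq, sub_self, poch_zero_left]
    split_ifs with hr <;> simp [hr, poch_zero]

lemma newtonArray_mul_newtonArray (a x y : ℝ) :
    newtonArray x y * newtonArray a x = newtonArray a y := by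
  simp only [newtonArray, gpol_add_half_neg_sq, ofDiagonals_mul]
  congr! 3 with i n
  have hsaal := saalschutzSum_eq (α := x - y) (ε := x + y + i) (β := 1 - (a - x) - n)
    (γ := a + x + i) (n := n) (by ring)
  rw [show 1 - (a - x) - n - (x - y) = 1 - (a - y) - n by ring,
    show a + x + i - (x - y) = a + y + i by ring, poch_reflect] at hsaal
  refine Eq.trans (sum_congr rfl fun ⟨p, q⟩ hpq => ?_) (hsaal.trans (by ring))
  have hβ : 1 - (a - x) - n + p = 1 - (a - x) - q := by
    rw [← mem_antidiagonal.mp hpq]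
    push_cast
    ring
  dsimp only
  rw [hβ, poch_reflect, Nat.cast_add, ← add_assoc]
  ring

end Newton

section Connection

variable (a b c d : ℝ)

/-- The coefficients of the Wilson polynomials in the Newton basis: with all four parameters
raised by `i / 2`, the coefficient of `g_q` in the polynomial of degree `q + r` is
`connectionArray a b c d (i + q) (i + q + r)`. -/
noncomputable def connectionArray : IncidenceAlgebra ℝ ℕ :=
  ofDiagonals fun i r =>
    poch (a + b + i) r * poch (a + c + i) r * poch (a + d + i) r /
      (r.factorial * poch (a + b + c + d - 1 + 2 * i + r) r)

/-- The inverse of `connectionArray`: the coefficients of the Newton basis in the Wilson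
polynomials. -/
noncomputable def connectionArrayInv : IncidenceAlgebra ℝ ℕ :=
  ofDiagonals fun i r =>
    (-1) ^ r * (poch (a + b + i) r * poch (a + c + i) r * poch (a + d + i) r) /
      (r.factorial * poch (a + b + c + d + 2 * i) r)

variable {a b c d}

lemma newtonArray_mul_connectionArray (hs : ∀ z : ℤ, a + b + c + d ≠ z) :
    newtonArray a d * connectionArray a b c d = connectionArray d b c a := by
  simp only [newtonArray, connectionArray, gpol_add_half_neg_sq, ofDiagonals_mul]
  congr! 3 with i n
  set D := a + b + c + d - 1 + 2 * i + n with hD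
  have hDn : poch D n ≠ 0 :=
    poch_ne_zero (fun z hz => hs (z + 1 - 2 * i - n) (by push_cast; linarith)) n
  have hsaal := saalschutzSum_eq (α := a - d) (ε := D) (β := a + b + i)
    (γ := a + c + i) (n := n) (by rw [hD]; ring)
  rw [show a + b + i - (a - d) = d + b + i by ring,
    show a + c + i - (a - d) = d + c + i by ring] at hsaal
  calc _ = poch (a + d + i) n / poch D n * saalschutzSum (a - d) D (a + b + i) (a + c + i) n := by
        rw [saalschutzSum, mul_sum]
        refine sum_congr rfl fun ⟨p, q⟩ hpq => ?_
        obtain rfl : p + q = n := mem_antidiagonal.mp hpq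
        have hshift : a + b + c + d - 1 + 2 * ((i + p : ℕ) : ℝ) + q = D + p := by
          rw [hD]; push_cast; ring
        dsimp only
        rw [hshift]
        rw [poch_add D] at hDn ⊢
        have hDq := right_ne_zero_of_mul hDn
        have hDp := left_ne_zero_of_mul hDn
        rw [poch_add (a + d + i), Nat.cast_add, ← add_assoc, ← add_assoc, ← add_assoc]
        field_simp
    _ = _ := by
        rw [hsaal, hD, show d + b + c + a - 1 + 2 * (i : ℝ) + n = a + b + c + d - 1 + 2 * i + n by
          ring, add_comm d a]
        field_simp

lemma connectionArrayInv_mul_connectionArray (hs : ∀ z : ℤ, a + b + c + d ≠ z) :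
    connectionArrayInv a b c d * connectionArray a b c d = 1 := by
  simp only [connectionArrayInv, connectionArray, ofDiagonals_mul]
  refine ofDiagonals_eq_one fun i n => ?_
  set S := a + b + c + d + 2 * i with hS
  set D := S - 1 + n with hD
  have hSn : poch S n ≠ 0 :=
    poch_ne_zero (fun z hz => hs (z - 2 * i) (by push_cast; linarith)) n
  have hDn : poch D n ≠ 0 :=
    poch_ne_zero (fun z hz => hs (z + 1 - 2 * i - n) (by push_cast; linarith)) n
  have hsaal := saalschutzSum_eq (α := 1) (ε := D) (β := 1) (γ := S) (n := n) (by rw [hD]; ring)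
  rw [sub_self, poch_zero_left] at hsaal
  calc _ = poch (a + b + i) n * poch (a + c + i) n * poch (a + d + i) n /
        (n.factorial * poch S n * poch D n) * saalschutzSum 1 D 1 S n := by
        rw [saalschutzSum, mul_sum]
        refine sum_congr rfl fun ⟨p, q⟩ hpq => ?_
        obtain rfl : p + q = n := mem_antidiagonal.mp hpq
        have hshift : a + b + c + d - 1 + 2 * ((i + p : ℕ) : ℝ) + q = D + p := by
          rw [hD, hS]; push_cast; ring
        dsimp only
        rw [hshift, ← poch_one_left (p + q)]
        have hn : poch 1 (p + q) ≠ 0 := by rw [poch_one_left]; positivity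
        rw [poch_add] at hDn hSn hn ⊢
        have hDq := right_ne_zero_of_mul hDn
        have hDp := left_ne_zero_of_mul hDn
        have hSq := right_ne_zero_of_mul hSn
        have hSp := left_ne_zero_of_mul hSn
        have hnq := right_ne_zero_of_mul hn
        have hnp := left_ne_zero_of_mul hn
        simp only [poch_add _ p q, Nat.cast_add, ← add_assoc]
        field_simp
    _ = if n = 0 then 1 else 0 := by
        rw [hsaal]
        split_ifs with hn <;> simp [hn, poch_zero]

end Connection

section Wilson

variable (a b c d x : ℝ)

/-- The values of the Wilson polynomials of degree `r`, with all parameters raised by `i / 2`, at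
`-(x + i / 2)^2`. -/
noncomputable def wilsonArray : IncidenceAlgebra ℝ ℕ :=
  ofDiagonals fun i r =>
    wilson (a + i / 2) (b + i / 2) (c + i / 2) (d + i / 2) r (-(x + i / 2) ^ 2)

/-- The inverse of `wilsonArray`, itself made of values of Wilson polynomials. -/
noncomputable def wilsonArrayInv : IncidenceAlgebra ℝ ℕ :=
  ofDiagonals fun i r =>
    (-1) ^ r * wilson (1 / 2 - a - (i + r) / 2) (1 / 2 - b - (i + r) / 2)
      (1 / 2 - c - (i + r) / 2) (1 / 2 - d - (i + r) / 2) r (-(1 / 2 - x - (i + r) / 2) ^ 2)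

lemma wilson_eq_sum_antidiagonal (n : ℕ) (z : ℝ) :
    wilson a b c d n z = ∑ p ∈ antidiagonal n,
      poch (a + b + p.1) p.2 * poch (a + c + p.1) p.2 * poch (a + d + p.1) p.2 /
        (p.2.factorial * poch (a + b + c + d - 1 + 2 * p.1 + p.2) p.2) * gpol a p.1 z := by
  rw [wilson, Nat.sum_antidiagonal_eq_sum_range_succ_mk]
  refine sum_congr rfl fun j hj => ?_
  rw [Nat.cast_sub (mem_range_succ_iff.mp hj)]
  congr 4
  ring

lemma newtonArray_mul_connectionArray_eq_wilsonArray :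
    newtonArray a x * connectionArray a b c d = wilsonArray a b c d x := by
  simp only [newtonArray, connectionArray, wilsonArray, ofDiagonals_mul]
  congr! 3 with i n
  rw [wilson_eq_sum_antidiagonal]
  refine sum_congr rfl fun p _ => ?_
  rw [mul_comm]
  push_cast
  ring_nf

lemma connectionArrayInv_mul_newtonArray :
    connectionArrayInv a b c d * newtonArray x a = wilsonArrayInv a b c d x := by
  simp only [newtonArray, connectionArrayInv, wilsonArrayInv, gpol_add_half_neg_sq,
    ofDiagonals_mul]
  congr! 3 with i n
  rw [wilson_eq_sum_antidiagonal, mul_sum, ← Nat.sum_antidiagonal_swap]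
  refine sum_congr rfl fun ⟨q, p⟩ hpq => ?_
  obtain rfl : q + p = n := mem_antidiagonal.mp hpq
  simp only [Prod.fst_swap, Prod.snd_swap, gpol_neg_sq]
  push_cast
  rw [show (1 / 2 - a - ((i : ℝ) + (q + p)) / 2) + (1 / 2 - b - (i + (q + p)) / 2) + q =
      1 - (a + b + i) - p by ring,
    show (1 / 2 - a - ((i : ℝ) + (q + p)) / 2) + (1 / 2 - c - (i + (q + p)) / 2) + q =
      1 - (a + c + i) - p by ring,
    show (1 / 2 - a - ((i : ℝ) + (q + p)) / 2) + (1 / 2 - d - (i + (q + p)) / 2) + q =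
      1 - (a + d + i) - p by ring,
    show (1 / 2 - a - ((i : ℝ) + (q + p)) / 2) + (1 / 2 - b - (i + (q + p)) / 2) +
      (1 / 2 - c - (i + (q + p)) / 2) + (1 / 2 - d - (i + (q + p)) / 2) - 1 + 2 * q + p =
      1 - (a + b + c + d + 2 * i) - p by ring,
    show (1 / 2 - a - ((i : ℝ) + (q + p)) / 2) - (1 / 2 - x - (i + (q + p)) / 2) = x - a by ring,
    show (1 / 2 - a - ((i : ℝ) + (q + p)) / 2) + (1 / 2 - x - (i + (q + p)) / 2) =
      1 - (x + a + (i + p)) - q by ring]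
  simp only [poch_reflect, pow_add]
  rcases neg_one_pow_eq_or ℝ p with hp | hp <;> rcases neg_one_pow_eq_or ℝ q with hq | hq <;>
    rw [hp, hq] <;> ring

variable {a b c d}

lemma wilsonArrayInv_mul_wilsonArray (hs : ∀ z : ℤ, a + b + c + d ≠ z) :
    wilsonArrayInv a b c d x * wilsonArray a b c d x = 1 := by
  rw [← connectionArrayInv_mul_newtonArray, ← newtonArray_mul_connectionArray_eq_wilsonArray,
    mul_assoc, ← mul_assoc (newtonArray x a), newtonArray_mul_newtonArray, newtonArray_self,
    one_mul, connectionArrayInv_mul_connectionArray hs]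

lemma wilsonArray_swap_left (hs : ∀ z : ℤ, a + b + c + d ≠ z) :
    wilsonArray d b c a x = wilsonArray a b c d x := by
  rw [← newtonArray_mul_connectionArray_eq_wilsonArray, ← newtonArray_mul_connectionArray hs,
    ← mul_assoc, newtonArray_mul_newtonArray, newtonArray_mul_connectionArray_eq_wilsonArray]

variable (a b c d)

lemma wilsonArray_swap_right : wilsonArray a b d c x = wilsonArray a b c d x := by
  simp only [← newtonArray_mul_connectionArray_eq_wilsonArray, connectionArray]
  congr! 4 with i r
  rw [mul_right_comm, add_right_comm (a + b) c d]

lemma newtonArray_mul_wilsonArray (y : ℝ) :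
    newtonArray x y * wilsonArray a b c d x = wilsonArray a b c d y := by
  simp only [← newtonArray_mul_connectionArray_eq_wilsonArray, ← mul_assoc,
    newtonArray_mul_newtonArray]

lemma wilsonArray_apply_self (i : ℕ) : wilsonArray a b c d x i i = 1 :=
  (ofDiagonals_apply_add _ i 0).trans (by simp [wilson, gpol, poch_zero])

end Wilson

section ComplementaryMinor

variable {R : Type*} [CommRing R]

lemma det_toBlocks₁₁_of_mul_eq_one {ι κ : Type*} [Fintype ι] [DecidableEq ι] [Fintype κ]
    [DecidableEq κ] {A B : Matrix (ι ⊕ κ) (ι ⊕ κ) R} (h : A * B = 1) :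
    A.toBlocks₁₁.det = A.det * B.toBlocks₂₂.det := by
  have hblocks : A * Matrix.fromBlocks 1 B.toBlocks₁₂ 0 B.toBlocks₂₂ =
      Matrix.fromBlocks A.toBlocks₁₁ 0 A.toBlocks₂₁ 1 := by
    rw [← A.fromBlocks_toBlocks, ← B.fromBlocks_toBlocks, Matrix.fromBlocks_multiply,
      ← Matrix.fromBlocks_one, Matrix.fromBlocks_inj] at h
    conv_lhs => rw [← A.fromBlocks_toBlocks, Matrix.fromBlocks_multiply, h.2.1, h.2.2.2]
    simp
  simpa using congr_arg Matrix.det hblocks.symm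

lemma val_finRotate_pow_apply (N t : ℕ) (i : Fin N) : ((finRotate N ^ t) i : ℕ) = (i + t) % N := by
  have := i.neZero
  induction t with
  | zero => simp [Nat.mod_eq_of_lt i.2]
  | succ t ih => simp [pow_succ', finRotate_apply, Fin.val_add, ih, add_assoc]

lemma finRotate_pow_castAdd {n : ℕ} (m : ℕ) (i : Fin n) :
    (finRotate (n + m) ^ m) (i.castAdd m) = (i.natAdd m).cast (add_comm m n) := by
  ext
  rw [val_finRotate_pow_apply, Fin.val_cast, Fin.val_natAdd, Fin.val_castAdd,
    Nat.mod_eq_of_lt (by omega), add_comm]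

lemma finRotate_pow_natAdd (n : ℕ) {m : ℕ} (i : Fin m) :
    (finRotate (n + m) ^ m) (i.natAdd n) = (i.castAdd n).cast (add_comm m n) := by
  ext
  rw [val_finRotate_pow_apply, Fin.val_cast, Fin.val_natAdd, Fin.val_castAdd, add_right_comm,
    add_comm (n + m), Nat.add_mod_right, Nat.mod_eq_of_lt (by omega)]

lemma sign_finRotate_pow (n m : ℕ) :
    Equiv.Perm.sign (finRotate (n + m) ^ m) = (-1) ^ (n * m) := by
  rw [map_pow, sign_finRotate, ← pow_mul]
  rcases m with - | m
  · rfl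
  · rw [← add_assoc, Nat.add_sub_cancel, add_mul, pow_add,
      (Nat.even_mul_succ_self m).neg_one_pow, mul_one]

lemma det_corner_of_mul_eq_one {n m : ℕ} {A B : Matrix (Fin (n + m)) (Fin (n + m)) R}
    (h : A * B = 1) :
    (A.submatrix (Fin.castAdd m) fun j => (j.natAdd m).cast (add_comm m n)).det =
      (-1) ^ (n * m) * A.det *
        (B.submatrix (fun i => (i.castAdd n).cast (add_comm m n)) (Fin.natAdd n)).det := by
  set ρ := finRotate (n + m) ^ m with hρ
  let e : Fin n ⊕ Fin m ≃ Fin (n + m) := finSumFinEquiv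
  have hAB : A.submatrix e (e.trans ρ) * B.submatrix (e.trans ρ) e = 1 := by
    rw [Matrix.submatrix_mul_equiv, h, Matrix.submatrix_one_equiv]
  have hdet : (A.submatrix e (e.trans ρ)).det = (-1) ^ (n * m) * A.det := by
    have := Matrix.det_permute' ρ A
    rw [sign_finRotate_pow, ← Matrix.det_submatrix_equiv_self e] at this
    simpa using this
  have := det_toBlocks₁₁_of_mul_eq_one hAB
  rw [hdet] at this
  convert this using 3
  · ext i j
    simp [Matrix.toBlocks₁₁, e, hρ, finRotate_pow_castAdd]
  · ext i j
    simp [Matrix.toBlocks₂₂, e, hρ, finRotate_pow_natAdd]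

lemma det_of_neg_one_pow_add_mul {m : ℕ} (n : ℕ) (M : Matrix (Fin m) (Fin m) R) :
    (Matrix.of fun i j : Fin m => (-1) ^ ((i : ℕ) + (n + j)) * M i j).det =
      (-1) ^ (n * m) * M.det := by
  have hrow := Matrix.det_mul_row (fun j : Fin m => (-1 : R) ^ (n + (j : ℕ))) M
  have hcol := Matrix.det_mul_column (fun i : Fin m => (-1 : R) ^ (i : ℕ))
    (Matrix.of fun i j : Fin m => (-1) ^ (n + (j : ℕ)) * M i j)
  have hsign (i : Fin m) : (-1 : R) ^ (i : ℕ) * (-1) ^ (n + (i : ℕ)) = (-1) ^ n := by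
    rw [← pow_add, add_left_comm, pow_add, (Even.add_self _).neg_one_pow, mul_one]
  rw [hrow, ← mul_assoc, ← prod_mul_distrib, prod_congr rfl fun i _ => hsign i, prod_const,
    card_univ, Fintype.card_fin, ← pow_mul] at hcol
  simpa only [Matrix.of_apply, ← mul_assoc, ← pow_add] using hcol

end ComplementaryMinor

section Corner

variable {R : Type*} [CommRing R]

/-- The top left `N × N` block of an infinite upper triangular matrix. -/
def truncation (f : IncidenceAlgebra R ℕ) (N : ℕ) : Matrix (Fin N) (Fin N) R :=
  Matrix.of fun i j => f i j

/-- The minor of size `n` in the upper right corner of the truncation to size `n + m`. -/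
def cornerMinor (f : IncidenceAlgebra R ℕ) (n m : ℕ) : R :=
  (Matrix.of fun i j : Fin n => f i (m + j)).det

lemma truncation_mul (f g : IncidenceAlgebra R ℕ) (N : ℕ) :
    truncation (f * g) N = truncation f N * truncation g N := by
  ext i k
  refine mul_apply_eq_sum_fin f g i k fun j hj => ?_
  rw [g.apply_eq_zero_of_not_le (by omega), mul_zero]

lemma truncation_one (N : ℕ) : truncation (1 : IncidenceAlgebra R ℕ) N = 1 := by
  ext i j
  simp [truncation, Matrix.one_apply, Fin.ext_iff]

lemma det_truncation (f : IncidenceAlgebra R ℕ) (N : ℕ) :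
    (truncation f N).det = ∏ i : Fin N, f i i :=
  Matrix.det_of_isUpperTriangular fun _ _ hij =>
    IncidenceAlgebra.apply_eq_zero_of_not_le (Fin.lt_def.mp hij).not_ge f

/-- **Jacobi's complementary minor identity** for unitriangular matrices. -/
lemma cornerMinor_of_mul_eq_one {f g : IncidenceAlgebra R ℕ} (h : g * f = 1)
    (hf : ∀ i, f i i = 1) (n m : ℕ) :
    cornerMinor f n m = (-1) ^ (n * m) * cornerMinor g m n := by
  have hfg : truncation f (n + m) * truncation g (n + m) = 1 := by
    rw [mul_eq_one_comm, ← truncation_mul, h, truncation_one]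
  have := det_corner_of_mul_eq_one hfg
  rwa [det_truncation, prod_eq_one fun (i : Fin (n + m)) _ => hf i, mul_one] at this

end Corner

section Casorati

variable (a b c d x : ℝ)

lemma gpol_neg_add_sq_self (i : ℕ) : gpol x i (-(x + i) ^ 2) = poch (2 * x + i) i := by
  rw [gpol_neg_sq, show x - (x + i) = 1 - 1 - (i : ℝ) by ring, poch_reflect, poch_one_left,
    ← add_assoc, ← two_mul]
  rcases neg_one_pow_eq_or ℝ i with hi | hi <;> rw [hi] <;> field_simp

lemma gpol_neg_add_sq_of_lt {i p : ℕ} (h : i < p) : gpol x p (-(x + i) ^ 2) = 0 := by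
  rw [gpol, prod_eq_zero (mem_range.mpr h) (neg_add_cancel _), mul_zero]

lemma newtonArray_zero_apply (y : ℝ) (p : ℕ) : newtonArray x y 0 p = gpol x p (-y ^ 2) := by
  simpa [newtonArray] using ofDiagonals_apply_add
    (fun i r => gpol (x + i / 2) r (-(y + i / 2) ^ 2)) 0 p

lemma wilsonArray_zero_apply (n : ℕ) : wilsonArray a b c d x 0 n = wilson a b c d n (-x ^ 2) := by
  simpa [wilsonArray] using ofDiagonals_apply_add
    (fun i r => wilson (a + i / 2) (b + i / 2) (c + i / 2) (d + i / 2) r (-(x + i / 2) ^ 2)) 0 n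

lemma det_gpol_neg_add_sq (n : ℕ) :
    (Matrix.of fun i p : Fin n => gpol x p (-(x + (i : ℕ)) ^ 2)).det =
      ∏ l ∈ Icc 1 (n - 1), poch (2 * x + l) l := by
  have hlower : (Matrix.of fun i p : Fin n =>
      gpol x p (-(x + (i : ℕ)) ^ 2)).IsLowerTriangular := fun i p hip =>
    gpol_neg_add_sq_of_lt x (Fin.lt_def.mp hip)
  simp only [Matrix.det_of_isLowerTriangular _ hlower, Matrix.of_apply, gpol_neg_add_sq_self]
  rw [Fin.prod_univ_eq_prod_range fun l => poch (2 * x + l) l]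
  rcases n with - | n
  · rfl
  · rw [Nat.add_sub_cancel, ← Ico_add_one_right_eq_Icc, prod_range_eq_mul_Ico _ n.add_one_pos,
      poch_zero, one_mul]

lemma wilson_neg_add_sq_eq_sum {n : ℕ} (i : Fin n) (k : ℕ) :
    wilson a b c d k (-(x + (i : ℕ)) ^ 2) =
      ∑ p : Fin n, gpol x p (-(x + (i : ℕ)) ^ 2) * wilsonArray a b c d x p k := by
  rw [← wilsonArray_zero_apply, ← newtonArray_mul_wilsonArray a b c d x]
  simp only [← newtonArray_zero_apply]
  refine mul_apply_eq_sum_fin _ _ 0 k fun p hp => ?_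
  rw [newtonArray_zero_apply, gpol_neg_add_sq_of_lt x (i.2.trans_le hp), zero_mul]

variable {x}

lemma wilsonCasorati_eq_cornerMinor {n : ℕ} (m : ℕ)
    (h : ∏ l ∈ Icc 1 (n - 1), poch (2 * x + l) l ≠ 0) :
    wilsonCasorati a b c d n m x = cornerMinor (wilsonArray a b c d x) n m := by
  rw [wilsonCasorati, div_eq_iff h, cornerMinor, ← det_gpol_neg_add_sq, mul_comm, ← Matrix.det_mul]
  congr 1
  ext i j
  exact wilson_neg_add_sq_eq_sum a b c d x i (m + j)

variable (x)

lemma wilsonArrayInv_apply_of_add_eq {i k i' k' N : ℕ} (hk : i' + k = N) (hi : i + k' = N) :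
    wilsonArrayInv a b c d x i' k' = (-1) ^ (i + k) *
      wilsonArray (1 / 2 - a - N / 2) (1 / 2 - b - N / 2) (1 / 2 - c - N / 2) (1 / 2 - d - N / 2)
        (1 / 2 - x - N / 2) i k := by
  by_cases hik : i ≤ k
  · obtain ⟨r, rfl⟩ := Nat.exists_eq_add_of_le hik
    obtain rfl : k' = i' + r := by omega
    have hN : (N : ℝ) = i + (i' + r) := by exact_mod_cast hi.symm
    rw [wilsonArrayInv, wilsonArray, ofDiagonals_apply_add, ofDiagonals_apply_add, ← add_assoc,
      pow_add, (Even.add_self i).neg_one_pow, one_mul, hN]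
    ring_nf
  · rw [IncidenceAlgebra.apply_eq_zero_of_not_le hik,
      IncidenceAlgebra.apply_eq_zero_of_not_le (by omega), mul_zero]

lemma cornerMinor_wilsonArrayInv (n m : ℕ) :
    cornerMinor (wilsonArrayInv a b c d x) m n = (-1) ^ (n * m) *
      cornerMinor (wilsonArray (1 - a - (n + m) / 2) (1 - b - (n + m) / 2) (1 - c - (n + m) / 2)
        (1 - d - (n + m) / 2) (1 - x - (n + m) / 2)) m n := by
  rw [cornerMinor, cornerMinor, ← det_of_neg_one_pow_add_mul, ← Matrix.det_transpose,
    ← Matrix.det_submatrix_equiv_self Fin.revPerm]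
  congr 1
  ext i j
  have hN : ((n + m - 1 : ℕ) : ℝ) = n + m - 1 := by
    rw [Nat.cast_pred (by have := i.pos; omega), Nat.cast_add]
  have := wilsonArrayInv_apply_of_add_eq a b c d x (i := i) (k := n + j) (i' := j.rev)
    (k' := n + i.rev) (N := n + m - 1) (by simp only [Fin.val_rev]; omega)
    (by simp only [Fin.val_rev]; omega)
  have hshift (y : ℝ) : 1 / 2 - y - (n + m - 1) / 2 = 1 - y - (n + m) / 2 := by ring
  simp only [hN, hshift] at this
  exact this

end Casorati

/-- the symmetry of normalized Casorati determinants of Wilson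
polynomials, with `h = (n+m)/2`. -/
theorem wilson_casorati_symmetry (n m : ℕ) (x a b c d : ℝ)
    (habcd : ∀ z : ℤ, a + b + c + d ≠ (z : ℝ))
    (h1 : (∏ l ∈ Finset.Icc 1 (n - 1),
      poch (2 * (x + a - ((n : ℝ) + m) / 2) + l) l) ≠ 0)
    (h2 : (∏ l ∈ Finset.Icc 1 (m - 1),
      poch (2 * (-x - a + 1) + l) l) ≠ 0) :
    wilsonCasorati (a - ((n : ℝ) + m) / 2) (b - ((n : ℝ) + m) / 2)
        (c - ((n : ℝ) + m) / 2) (d - ((n : ℝ) + m) / 2)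
        n m (x + a - ((n : ℝ) + m) / 2)
    = wilsonCasorati (-d + 1) (-b + 1) (-a + 1) (-c + 1) m n (-x - a + 1) := by
  set h : ℝ := ((n : ℝ) + m) / 2 with hh
  have hshifted (z : ℤ) : (a - h) + (b - h) + (c - h) + (d - h) ≠ z := fun hz =>
    habcd (z + 2 * n + 2 * m) (by push_cast; linarith)
  have hreflected (z : ℤ) : (-a + 1) + (-b + 1) + (-c + 1) + (-d + 1) ≠ z := fun hz =>
    habcd (4 - z) (by push_cast; linarith)
  have hreflect (y : ℝ) : 1 - (y - h) - h = -y + 1 := by ring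
  rw [wilsonCasorati_eq_cornerMinor _ _ _ _ _ h1, wilsonCasorati_eq_cornerMinor _ _ _ _ _ h2,
    wilsonArray_swap_right (-d + 1) (-b + 1) (-c + 1) (-a + 1),
    wilsonArray_swap_left _ hreflected,
    cornerMinor_of_mul_eq_one (wilsonArrayInv_mul_wilsonArray _ hshifted)
      (wilsonArray_apply_self _ _ _ _ _),
    cornerMinor_wilsonArrayInv, ← mul_assoc, ← pow_add, (Even.add_self _).neg_one_pow, one_mul,
    ← hh]
  simp only [hreflect, neg_add']
end

section
/- Let \mu be a positive Borel measure on \mathbb{R} for which every polynomial is integrable, let m \ge 1 be an integer, let (\psi_j)_{j\ge 0} be polynomials with deg \psi_j = j and leading coefficient \upsilon_j, and let s(x_1, \dots, x_m) be a symmetric polynomial in m variables. Then: \int_{\mathbb{R}^m} s(x) \, \Lambda(x) \prod_{j=1}^m \psi_{j-1}(x_j) \; d\mu(x_1)\cdots d\mu(x_m) = \frac{(-1)^{\binom{m}{2}} \prod_{j=0}^{m-1} \upsilon_j}{m!} \int_{\mathbb{R}^m} s(x) \, \Lambda^2(x) \; d\mu(x_1)\cdots d\mu(x_m). -/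
open MeasureTheory Polynomial

/-!
The measure is invariant under permutations of the coordinates, so the integrand `s Λ ∏ ψ_j(x_j)`
may be averaged over them. Since `s` is symmetric and `Λ` alternating, the average is
`s Λ det (ψ_j(x_i)) / m!`. Expressing the `ψ_j` in the monomial basis is a triangular change of
columns, so this determinant is `∏ υ_j` times the Vandermonde determinant, which is `Λ` up to the
sign `(-1) ^ (m choose 2)`.
-/

section Determinants

variable {R : Type*} [CommRing R] {m : ℕ}

theorem det_vandermonde_eq_neg_one_pow_mul_prod (x : Fin m → R) :
    (Matrix.vandermonde x).det =
      (-1) ^ m.choose 2 * ∏ i, ∏ j ∈ Finset.Ioi i, (x i - x j) := by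
  have card_pairs : ∑ i : Fin m, (Finset.Ioi i).card = m.choose 2 := by
    simp only [Fin.card_Ioi]
    rw [Fin.sum_univ_eq_sum_range (fun i => m - 1 - i), Finset.sum_range_reflect (fun i => i),
      Finset.sum_range_id, Nat.choose_two_right]
  rw [Matrix.det_vandermonde, ← card_pairs, ← Finset.prod_pow_eq_pow_sum,
    ← Finset.prod_mul_distrib]
  refine Finset.prod_congr rfl fun i _ => ?_
  rw [← Finset.prod_neg]
  simp only [neg_sub]

theorem det_eval_eq_det_vandermonde_mul_prod_coeff (x : Fin m → R) (p : Fin m → R[X])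
    (hp : ∀ j, (p j).natDegree ≤ j) :
    (Matrix.of fun i j => (p j).eval (x i)).det =
      (Matrix.vandermonde x).det * ∏ j, (p j).coeff j := by
  have coeff_triangular : (Matrix.of fun i j : Fin m => (p j).coeff i).IsUpperTriangular :=
    fun i j hji => coeff_eq_zero_of_natDegree_lt ((hp j).trans_lt hji)
  rw [Matrix.eval_matrixOfPolynomials_eq_vandermonde_mul_matrixOfPolynomials x p hp,
    Matrix.det_mul, Matrix.det_of_isUpperTriangular coeff_triangular]
  simp only [Matrix.of_apply]

end Determinants

theorem measurePreserving_pi_comp_equiv {ι ι' α : Type*} [Fintype ι] [Fintype ι']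
    [MeasurableSpace α] (μ : ι → Measure α) [∀ i, SigmaFinite (μ i)] (e : ι' ≃ ι) :
    MeasurePreserving (fun x : ι → α => x ∘ e) (Measure.pi μ) (Measure.pi (μ ∘ e)) := by
  have : ∀ i, SigmaFinite ((μ ∘ e) i) := fun i => inferInstanceAs (SigmaFinite (μ (e i)))
  exact measurePreserving_arrowCongr' μ (μ ∘ e) e.symm (MeasurableEquiv.refl α) fun i => by
    simp only [Function.comp_apply, e.apply_symm_apply]
    exact MeasurePreserving.id (μ i)

theorem integral_sum_comp_of_measurePreserving {κ α E : Type*} [Fintype κ] [MeasurableSpace α]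
    [NormedAddCommGroup E] [NormedSpace ℝ E] {ν : Measure α} {T : κ → α → α}
    (hT : ∀ k, MeasurePreserving (T k) ν ν) {f : α → E} (hf : Integrable f ν) :
    ∫ x, ∑ k, f (T k x) ∂ν = Fintype.card κ • ∫ x, f x ∂ν := by
  have integral_comp (k : κ) : ∫ x, f (T k x) ∂ν = ∫ x, f x ∂ν := by
    rw [← integral_map (hT k).aemeasurable (by simpa [(hT k).map_eq] using hf.1), (hT k).map_eq]
  have integrable_comp (k : κ) : Integrable (fun x => f (T k x)) ν :=
    (hT k).integrable_comp_of_integrable hf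
  rw [integral_finsetSum _ fun k _ => integrable_comp k]
  simp only [integral_comp, Finset.sum_const, Finset.card_univ]

section Symmetrization

variable {𝕜 : Type*} [RCLike 𝕜]

theorem integrable_pi_eval_mvPolynomial {ι : Type*} [Fintype ι] [MeasurableSpace 𝕜]
    {μ : ι → Measure 𝕜} [∀ i, SigmaFinite (μ i)]
    (hμ : ∀ i (n : ℕ), Integrable (fun x => x ^ n) (μ i)) (p : MvPolynomial ι 𝕜) :
    Integrable (fun x => MvPolynomial.eval x p) (Measure.pi μ) := by
  simp only [MvPolynomial.eval_eq']
  exact integrable_finsetSum _ fun d _ =>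
    (Integrable.fintype_prod_dep fun i => hμ i (d i)).const_mul _

theorem integrable_eval_mul_prod_sub_mul_prod_eval {m : ℕ} [MeasurableSpace 𝕜]
    {μ : Fin m → Measure 𝕜} [∀ i, SigmaFinite (μ i)]
    (hμ : ∀ i (n : ℕ), Integrable (fun x => x ^ n) (μ i)) (s : MvPolynomial (Fin m) 𝕜)
    (ψ : Fin m → 𝕜[X]) :
    Integrable (fun x => MvPolynomial.eval x s * (∏ i, ∏ j ∈ Finset.Ioi i, (x i - x j)) *
      ∏ j, (ψ j).eval (x j)) (Measure.pi μ) := by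
  have integrable_eval := integrable_pi_eval_mvPolynomial hμ
    (s * (∏ i, ∏ j ∈ Finset.Ioi i, (MvPolynomial.X i - MvPolynomial.X j)) *
      ∏ j, (ψ j).toMvPolynomial j)
  simp only [map_mul, map_prod, map_sub, MvPolynomial.eval_X,
    MvPolynomial.eval_toMvPolynomial] at integrable_eval
  exact integrable_eval

theorem integral_mul_prod_eq_inv_factorial_mul_integral_mul_det {ι α : Type*} [Fintype ι]
    [DecidableEq ι] [MeasurableSpace α] {ν : Measure (ι → α)}
    (hν : ∀ σ : Equiv.Perm ι, MeasurePreserving (fun x => x ∘ σ) ν ν) {f : (ι → α) → 𝕜}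
    (hf : ∀ (σ : Equiv.Perm ι) x, f (x ∘ σ) = σ.sign * f x) (φ : ι → α → 𝕜)
    (hint : Integrable (fun x => f x * ∏ j, φ j (x j)) ν) :
    ∫ x, f x * ∏ j, φ j (x j) ∂ν =
      ((Fintype.card ι).factorial : 𝕜)⁻¹ *
        ∫ x, f x * (Matrix.of fun i j => φ j (x i)).det ∂ν := by
  have sum_perm (x : ι → α) :
      ∑ σ : Equiv.Perm ι, f (x ∘ σ) * ∏ j, φ j ((x ∘ σ) j) =
        f x * (Matrix.of fun i j => φ j (x i)).det := by
    rw [Matrix.det_apply', Finset.mul_sum]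
    refine Finset.sum_congr rfl fun σ _ => ?_
    simp only [hf, Function.comp_apply, Matrix.of_apply]
    ring
  have factorial_ne_zero : ((Fintype.card ι).factorial : 𝕜) ≠ 0 :=
    Nat.cast_ne_zero.mpr (Nat.factorial_ne_zero _)
  rw [eq_inv_mul_iff_mul_eq₀ factorial_ne_zero, ← nsmul_eq_mul, ← Fintype.card_perm,
    ← integral_sum_comp_of_measurePreserving hν hint]
  simp only [sum_perm]

theorem vandermonde_symmetrization_general {m : ℕ} [MeasurableSpace 𝕜] {ν : Measure (Fin m → 𝕜)}
    (hν : ∀ σ : Equiv.Perm (Fin m), MeasurePreserving (fun x => x ∘ σ) ν ν)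
    {s : (Fin m → 𝕜) → 𝕜} (hs : ∀ (σ : Equiv.Perm (Fin m)) x, s (x ∘ σ) = s x)
    {ψ : Fin m → 𝕜[X]} (hψ : ∀ j, (ψ j).natDegree ≤ j)
    (hint : Integrable (fun x => s x * (∏ i, ∏ j ∈ Finset.Ioi i, (x i - x j)) *
      ∏ j, (ψ j).eval (x j)) ν) :
    ∫ x, s x * (∏ i, ∏ j ∈ Finset.Ioi i, (x i - x j)) * ∏ j, (ψ j).eval (x j) ∂ν =
      ((-1) ^ m.choose 2 * ∏ j, (ψ j).coeff j) / m.factorial *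
        ∫ x, s x * (∏ i, ∏ j ∈ Finset.Ioi i, (x i - x j)) ^ 2 ∂ν := by
  have alternating (σ : Equiv.Perm (Fin m)) (x : Fin m → 𝕜) :
      s (x ∘ σ) * ∏ i, ∏ j ∈ Finset.Ioi i, ((x ∘ σ) i - (x ∘ σ) j) =
        σ.sign * (s x * ∏ i, ∏ j ∈ Finset.Ioi i, (x i - x j)) := by
    simp only [Function.comp_apply]
    rw [hs, σ.prod_Ioi_comp_eq_sign_mul_prod fun i j => (neg_sub (x j) (x i)).symm, mul_left_comm]
  have mul_det (x : Fin m → 𝕜) :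
      s x * (∏ i, ∏ j ∈ Finset.Ioi i, (x i - x j)) * (Matrix.of fun i j => (ψ j).eval (x i)).det =
        ((-1) ^ m.choose 2 * ∏ j, (ψ j).coeff j) *
          (s x * (∏ i, ∏ j ∈ Finset.Ioi i, (x i - x j)) ^ 2) := by
    rw [det_eval_eq_det_vandermonde_mul_prod_coeff x ψ hψ, det_vandermonde_eq_neg_one_pow_mul_prod]
    ring
  rw [integral_mul_prod_eq_inv_factorial_mul_integral_mul_det hν alternating
    (fun j y => (ψ j).eval y) hint, Fintype.card_fin]
  simp only [mul_det, integral_const_mul]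
  rw [← mul_assoc, inv_mul_eq_div]

end Symmetrization

/-- the symmetrization lemma turning one Vandermonde factor
into a squared Vandermonde factor in a multiple integral. -/
theorem vandermonde_symmetrization
    (μ : Measure ℝ) [SigmaFinite μ]
    (hint : ∀ f : Polynomial ℝ, Integrable (fun x => f.eval x) μ)
    (m : ℕ) (hm : 1 ≤ m)
    (ψ : ℕ → Polynomial ℝ) (hψ : ∀ j : ℕ, (ψ j).degree = (j : ℕ))
    (s : MvPolynomial (Fin m) ℝ) (hs : s.IsSymmetric) :
    (∫ x : Fin m → ℝ,
      MvPolynomial.eval x s *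
        (∏ i : Fin m, ∏ j ∈ Finset.Ioi i, (x i - x j)) *
        ∏ j : Fin m, (ψ (j : ℕ)).eval (x j)
      ∂(Measure.pi fun _ => μ))
    = ((-1 : ℝ) ^ m.choose 2 * ∏ j ∈ Finset.range m, (ψ j).leadingCoeff) /
        m.factorial *
      ∫ x : Fin m → ℝ,
        MvPolynomial.eval x s *
          (∏ i : Fin m, ∏ j ∈ Finset.Ioi i, (x i - x j)) ^ 2
        ∂(Measure.pi fun _ => μ) := by
  have hdeg (j : ℕ) : (ψ j).natDegree = j := natDegree_eq_of_degree_eq_some (hψ j)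
  simpa only [leadingCoeff, hdeg, Fin.prod_univ_eq_prod_range (fun j => (ψ j).coeff j)] using
    vandermonde_symmetrization_general (measurePreserving_pi_comp_equiv fun _ => μ)
      (fun σ x => by rw [← MvPolynomial.eval_rename, hs σ]) (fun j : Fin m => (hdeg j).le)
      (integrable_eval_mul_prod_sub_mul_prod_eval (fun _ n => by simpa using hint (X ^ n)) s _)
end

section
/- Let \mu be a positive Borel measure on \mathbb{R} for which every polynomial is integrable, admitting a sequence (\hat p_n)_{n\ge 0} of monic orthogonal polynomials (deg \hat p_n = n, \hat p_n monic, \int \hat p_n \hat p_k d\mu = 0 for n \ne k), and write \|\hat p_j\|^2 = \int \hat p_j^2 d\mu. Set C_{n,m} = \frac{(-1)^{mn} \, m! \, \prod_{j=0}^{m-1} \|\hat p_j\|^2}{\prod_{j=0}^{n-1} j!}. Then for every real u, every integer n \ge 0 and every integer m \ge 1, the following two identities hold: (i) \int_{\mathbb{R}^m} \Lambda^2(x) \prod_{j=1}^m (x_j - u)^n \, d\mu(x_1)\cdots d\mu(x_m) = C_{n,m} \cdot \det\big( \hat p_{m+j-1}^{(i-1)}(u) \big)_{i,j=1}^n, where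 \hat p^{(i-1)} is the (i-1)-st derivative; and (ii) \int_{\mathbb{R}^m} \Lambda^2(x) \prod_{j=1}^m (x_j - u - n + 1)_n \, d\mu(x_1)\cdots d\mu(x_m) = C_{n,m} \cdot \det\big( \Delta^{i-1}\hat p_{m+j-1}(u) \big)_{i,j=1}^n, where \Delta is the forward difference operator \Delta f(x) = f(x+1) - f(x). The 0\times 0 determinants equal 1 when n = 0. -/
open MeasureTheory Polynomial

/-- The forward difference operator `Δ f (x) = f (x+1) - f x`. -/
noncomputable def fdiff (g : ℝ → ℝ) : ℝ → ℝ := fun x => g (x + 1) - g x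

/-!
Both weights have the form `∏ j, w (x j)` with `w` monic of degree `n`, and the linear functionals
`L i f = (T ^ i f) (u)`, `i < n`, with `T` the derivative or the forward difference, vanish on the
multiples of `w`. Consider the determinant of size `m + n` with rows `p s (x i)` and `L i (p s)`.
Replacing the basis `p s` of the polynomials of degree less than `m + n` by
`1, X, …, X ^ (n - 1), w, w X, …, w X ^ (m - 1)` makes it block triangular, so up to the sign
`(-1) ^ (m * n)` of a block swap it equals `∏ j, w (x j) * V(x) * det (L i (X ^ j))`, where `V` is
the Vandermonde determinant and the last factor is `∏ j < n, j!`. Multiplying by the second factor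
`V(x) = det (p k (x i))` and integrating by the Andréief identity replaces the rows `p s (x i)` by
`∫ p i * p s`; by orthogonality the result is again block triangular, with diagonal blocks
`diag (∫ p i ^ 2)` and `L i (p (m + j))`.
-/

section BorderedAndreief

variable {ι m n α R 𝕜 : Type*} [Fintype ι] [Fintype m] [DecidableEq m] [Fintype n]
  [DecidableEq n] [CommRing R]

theorem det_fromRows_eq_sum_perm (A : Matrix m (m ⊕ n) R) (B : Matrix n (m ⊕ n) R) :
    (Matrix.fromRows A B).det = ∑ σ : Equiv.Perm (m ⊕ n),
      (Equiv.Perm.sign σ * ∏ j, B j (σ (Sum.inr j))) * ∏ i, A i (σ (Sum.inl i)) := by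
  rw [← Matrix.det_transpose, Matrix.det_apply']
  refine Finset.sum_congr rfl fun σ _ => ?_
  simp only [Matrix.transpose_apply, Fintype.prod_sum_type, Matrix.fromRows_apply_inl,
    Matrix.fromRows_apply_inr]
  ring

theorem prod_mul_det_fromRows (v : m → R) (A : Matrix m (m ⊕ n) R) (B : Matrix n (m ⊕ n) R) :
    (∏ i, v i) * (Matrix.fromRows A B).det =
      (Matrix.fromRows (Matrix.of fun i s => v i * A i s) B).det := by
  have h := Matrix.det_mul_column (Sum.elim v 1) (Matrix.fromRows A B)
  rw [Fintype.prod_sum_type] at h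
  simp only [Sum.elim_inl, Sum.elim_inr, Pi.one_apply, Finset.prod_const_one, mul_one] at h
  rw [← h]
  congr 1
  ext (i | j) s <;> simp

theorem det_fromRows_comp_perm (g : m ⊕ n → α → R) (B : Matrix n (m ⊕ n) R) (σ : Equiv.Perm m)
    (x : m → α) :
    (Matrix.fromRows (Matrix.of fun i s => g s ((x ∘ σ) i)) B).det =
      Equiv.Perm.sign σ * (Matrix.fromRows (Matrix.of fun i s => g s (x i)) B).det := by
  have h := Matrix.det_permute (Equiv.Perm.sumCongr σ (1 : Equiv.Perm n))
    (Matrix.fromRows (Matrix.of fun i s => g s (x i)) B)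
  rw [Equiv.Perm.sign_sumCongr, Equiv.Perm.sign_one, mul_one] at h
  rw [← h]
  congr 1
  ext (i | j) s <;> simp

variable [RCLike 𝕜] [MeasurableSpace α] {μ : Measure α} [SigmaFinite μ]

theorem integrable_det_fromRows {h : m → m ⊕ n → α → 𝕜} (hh : ∀ i s, Integrable (h i s) μ)
    (B : Matrix n (m ⊕ n) 𝕜) :
    Integrable (fun x : m → α => (Matrix.fromRows (Matrix.of fun i s => h i s (x i)) B).det)
      (Measure.pi fun _ => μ) := by
  simp_rw [det_fromRows_eq_sum_perm]
  exact integrable_finsetSum _ fun σ _ =>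
    (Integrable.fintype_prod fun i => hh i (σ (Sum.inl i))).const_mul _

theorem integral_det_fromRows {h : m → m ⊕ n → α → 𝕜} (hh : ∀ i s, Integrable (h i s) μ)
    (B : Matrix n (m ⊕ n) 𝕜) :
    ∫ x : m → α, (Matrix.fromRows (Matrix.of fun i s => h i s (x i)) B).det
        ∂(Measure.pi fun _ => μ) =
      (Matrix.fromRows (Matrix.of fun i s => ∫ t, h i s t ∂μ) B).det := by
  simp_rw [det_fromRows_eq_sum_perm]
  rw [integral_finsetSum _ fun σ _ =>
    (Integrable.fintype_prod fun i => hh i (σ (Sum.inl i))).const_mul _]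
  refine Finset.sum_congr rfl fun σ _ => ?_
  rw [integral_const_mul]
  exact congrArg _ (integral_fintype_prod_eq_prod fun i => h i (σ (Sum.inl i)))

theorem measurePreserving_comp_perm (σ : Equiv.Perm ι) :
    MeasurePreserving (fun x : ι → α => x ∘ σ) (Measure.pi fun _ => μ)
      (Measure.pi fun _ => μ) :=
  measurePreserving_arrowCongr' (fun _ => μ) (fun _ => μ) σ.symm (MeasurableEquiv.refl α)
    fun _ => MeasurePreserving.id μ

theorem integral_det_mul_of_alternating [DecidableEq ι] (f : ι → α → 𝕜) {Φ : (ι → α) → 𝕜}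
    (hΦ : ∀ (σ : Equiv.Perm ι) (x : ι → α), Φ (x ∘ σ) = Equiv.Perm.sign σ * Φ x)
    (hint : Integrable (fun x => (∏ i, f i (x i)) * Φ x) (Measure.pi fun _ => μ)) :
    ∫ x : ι → α, (Matrix.of fun i j => f j (x i)).det * Φ x ∂(Measure.pi fun _ => μ) =
      (Fintype.card ι).factorial * ∫ x : ι → α, (∏ i, f i (x i)) * Φ x
        ∂(Measure.pi fun _ => μ) := by
  have expand (x : ι → α) : (Matrix.of fun i j => f j (x i)).det * Φ x =
      ∑ σ : Equiv.Perm ι, (∏ i, f i ((x ∘ σ) i)) * Φ (x ∘ σ) := by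
    simp only [Matrix.det_apply', Finset.sum_mul, hΦ, Matrix.of_apply, Function.comp_apply]
    exact Finset.sum_congr rfl fun σ _ => by ring
  have relabel (σ : Equiv.Perm ι) :
      ∫ x : ι → α, (∏ i, f i ((x ∘ σ) i)) * Φ (x ∘ σ) ∂(Measure.pi fun _ => μ) =
        ∫ x : ι → α, (∏ i, f i (x i)) * Φ x ∂(Measure.pi fun _ => μ) :=
    (measurePreserving_comp_perm σ).integral_comp
      (MeasurableEquiv.arrowCongr' σ.symm (MeasurableEquiv.refl α)).measurableEmbedding
      fun x => (∏ i, f i (x i)) * Φ x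
  have integrable_relabel (σ : Equiv.Perm ι) :
      Integrable (fun x : ι → α => (∏ i, f i ((x ∘ σ) i)) * Φ (x ∘ σ)) (Measure.pi fun _ => μ) :=
    (measurePreserving_comp_perm σ).integrable_comp_of_integrable hint
  simp_rw [expand]
  rw [integral_finsetSum _ fun σ _ => integrable_relabel σ]
  simp only [relabel, Finset.sum_const, Finset.card_univ, Fintype.card_perm, nsmul_eq_mul]

-- The Andréief identity, with the second determinant bordered by constant rows.
theorem integral_det_mul_det_fromRows (f : m → α → 𝕜) (g : m ⊕ n → α → 𝕜)
    (B : Matrix n (m ⊕ n) 𝕜) (hfg : ∀ i s, Integrable (fun t => f i t * g s t) μ) :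
    ∫ x : m → α, (Matrix.of fun i j => f j (x i)).det *
        (Matrix.fromRows (Matrix.of fun i s => g s (x i)) B).det ∂(Measure.pi fun _ => μ) =
      (Fintype.card m).factorial *
        (Matrix.fromRows (Matrix.of fun i s => ∫ t, f i t * g s t ∂μ) B).det := by
  rw [integral_det_mul_of_alternating f (det_fromRows_comp_perm g B)]
  · simp only [prod_mul_det_fromRows, Matrix.of_apply, integral_det_fromRows hfg]
  · simpa only [prod_mul_det_fromRows, Matrix.of_apply] using integrable_det_fromRows hfg B

end BorderedAndreief

section BlockSwap

variable {m n : ℕ}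

/-- The permutation of `Fin m ⊕ Fin n` which, after the identification `finSumFinEquiv` with
`Fin (m + n)`, moves the first `m` positions behind the last `n`, keeping the order in each block.
-/
def blockSwap (m n : ℕ) : Equiv.Perm (Fin m ⊕ Fin n) :=
  finSumFinEquiv.symm.permCongr (finRotate (m + n) ^ n)

theorem val_finRotate_pow (N k : ℕ) (i : Fin N) : ((finRotate N ^ k) i : ℕ) = (i + k) % N := by
  have := i.neZero
  induction k with
  | zero => simp [Nat.mod_eq_of_lt i.isLt]
  | succ k ih =>
    rw [pow_succ', Equiv.Perm.mul_apply, finRotate_apply, Fin.val_add, ih, Fin.val_one',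
      Nat.add_mod_mod, Nat.mod_add_mod, add_assoc]

theorem val_finSumFinEquiv_blockSwap_inl (i : Fin m) :
    (finSumFinEquiv (blockSwap m n (Sum.inl i)) : ℕ) = n + i := by
  simp only [blockSwap, Equiv.permCongr_apply, Equiv.symm_symm, Equiv.apply_symm_apply,
    val_finRotate_pow, finSumFinEquiv_apply_left, Fin.val_castAdd]
  rw [Nat.mod_eq_of_lt (by omega), add_comm]

theorem val_finSumFinEquiv_blockSwap_inr (j : Fin n) :
    (finSumFinEquiv (blockSwap m n (Sum.inr j)) : ℕ) = j := by
  simp only [blockSwap, Equiv.permCongr_apply, Equiv.symm_symm, Equiv.apply_symm_apply,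
    val_finRotate_pow, finSumFinEquiv_apply_right, Fin.val_natAdd]
  rw [add_right_comm, Nat.add_mod_left, Nat.mod_eq_of_lt (by omega)]

theorem sign_blockSwap (m n : ℕ) : Equiv.Perm.sign (blockSwap m n) = (-1) ^ (m * n) := by
  rw [blockSwap, Equiv.Perm.sign_permCongr, map_pow, sign_finRotate, ← pow_mul]
  refine neg_one_pow_congr ?_
  rcases n with _ | n
  · simp only [mul_zero]
  · simp only [← add_assoc, Nat.add_sub_cancel, Nat.even_mul, Nat.even_add, Nat.even_add_one]
    tauto

end BlockSwap

section FunctionalDeterminants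

variable {ι R : Type*} [Fintype ι] [DecidableEq ι] [CommRing R]

theorem det_apply_monic_eq_det_apply_X_pow {N : ℕ} (e : ι ≃ Fin N) (l : ι → Module.Dual R R[X])
    {q : ι → R[X]} (hq : ∀ s, (q s).Monic) (hdeg : ∀ s, (q s).natDegree = e s) :
    (Matrix.of fun r s => l r (q s)).det = (Matrix.of fun r s => l r (X ^ (e s : ℕ))).det := by
  have factor : (Matrix.of fun r s => l r (q s)) =
      (Matrix.of fun r s => l r (X ^ (e s : ℕ))) * Matrix.of fun s t => (q t).coeff (e s) := by
    ext r t
    have expand : q t = ∑ s, (q t).coeff (e s) • X ^ (e s : ℕ) := by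
      rw [e.sum_comp fun k : Fin N => (q t).coeff k • (X : R[X]) ^ (k : ℕ),
        Fin.sum_univ_eq_sum_range fun k => (q t).coeff k • (X : R[X]) ^ k]
      simpa only [smul_X_eq_monomial] using
        (q t).as_sum_range' N (by rw [hdeg]; exact (e t).isLt)
    rw [Matrix.mul_apply, Matrix.of_apply]
    conv_lhs => rw [expand]
    simp only [map_sum, map_smul, smul_eq_mul, Matrix.of_apply, mul_comm]
  have unitriangular : (Matrix.of fun s t => (q t).coeff (e s)).det = 1 := by
    rw [← Matrix.det_submatrix_equiv_self e.symm]
    simpa only [Matrix.submatrix, Matrix.of_apply, Equiv.apply_symm_apply] using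
      Matrix.det_matrixOfPolynomials (fun i => q (e.symm i)) (by simp [hdeg]) fun i => hq _
  rw [factor, Matrix.det_mul, unitriangular, mul_one]

theorem det_apply_monic_eq_sign_mul {N : ℕ} (e : ι ≃ Fin N) (σ : Equiv.Perm ι)
    (l : ι → Module.Dual R R[X]) {p q : ι → R[X]} (hp : ∀ s, (p s).Monic)
    (hpdeg : ∀ s, (p s).natDegree = e s) (hq : ∀ s, (q s).Monic)
    (hqdeg : ∀ s, (q s).natDegree = e (σ s)) :
    (Matrix.of fun r s => l r (p s)).det =
      Equiv.Perm.sign σ * (Matrix.of fun r s => l r (q s)).det := by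
  have h := Matrix.det_permute' σ.symm (Matrix.of fun r s => l r (q s))
  rw [Equiv.Perm.sign_symm] at h
  rw [← h, det_apply_monic_eq_det_apply_X_pow e l hp hpdeg]
  exact (det_apply_monic_eq_det_apply_X_pow e l (q := fun s => q (σ.symm s)) (fun s => hq _)
    fun s => by simp [hqdeg]).symm

theorem det_apply_X_pow_eq_prod {n : ℕ} (L : ℕ → Module.Dual R R[X]) {a : ℕ → R[X]}
    (ha : ∀ k, (a k).Monic) (hdeg : ∀ k, (a k).natDegree = k)
    (hL : ∀ i k, i < k → L i (a k) = 0) :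
    (Matrix.of fun i j : Fin n => L i (X ^ (j : ℕ))).det = ∏ i ∈ Finset.range n, L i (a i) := by
  rw [← Fin.prod_univ_eq_prod_range fun i => L i (a i)]
  have h := det_apply_monic_eq_det_apply_X_pow (Equiv.refl (Fin n)) (fun i => L i)
    (q := fun k => a k) (fun k => ha k) fun k => hdeg k
  exact h.symm.trans (Matrix.det_of_isLowerTriangular _ fun i k hik => hL i k hik)

theorem det_fromRows_eval_apply {m n : ℕ} (x : Fin m → R) (L : Fin n → Module.Dual R R[X])
    {p : Fin m ⊕ Fin n → R[X]} (hp : ∀ s, (p s).Monic)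
    (hpdeg : ∀ s, (p s).natDegree = finSumFinEquiv s) {w : R[X]} (hw : w.Monic)
    (hwdeg : w.natDegree = n) (hL : ∀ i q, L i (w * q) = 0) :
    (Matrix.fromRows (Matrix.of fun i s => (p s).eval (x i)) (Matrix.of fun j s => L j (p s))).det =
      (-1) ^ (m * n) * (∏ i, w.eval (x i)) * (Matrix.vandermonde x).det *
        (Matrix.of fun i j : Fin n => L i (X ^ (j : ℕ))).det := by
  nontriviality R
  let l : Fin m ⊕ Fin n → Module.Dual R R[X] := Sum.elim (fun i => leval (x i)) L
  let q : Fin m ⊕ Fin n → R[X] := Sum.elim (fun k => w * X ^ (k : ℕ)) fun k => X ^ (k : ℕ)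
  have rows : Matrix.fromRows (Matrix.of fun i s => (p s).eval (x i))
      (Matrix.of fun j s => L j (p s)) = Matrix.of fun r s => l r (p s) := by
    ext (i | j) s <;> rfl
  have blocks : (Matrix.of fun r s => l r (q s)) = Matrix.fromBlocks
      (Matrix.of fun i k => w.eval (x i) * Matrix.vandermonde x i k)
      (Matrix.of fun i (k : Fin n) => x i ^ (k : ℕ)) 0
      (Matrix.of fun i (j : Fin n) => L i (X ^ (j : ℕ))) := by
    ext (i | i) (k | k) <;> simp [l, q, hL]
  have q_monic (s) : (q s).Monic := by
    rcases s with k | k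
    exacts [hw.mul (monic_X_pow _), monic_X_pow _]
  have q_natDegree (s) : (q s).natDegree = finSumFinEquiv (blockSwap m n s) := by
    rcases s with k | k
    · rw [val_finSumFinEquiv_blockSwap_inl]
      exact (hw.natDegree_mul (monic_X_pow _)).trans
        (congrArg₂ (· + ·) hwdeg (natDegree_X_pow _))
    · rw [val_finSumFinEquiv_blockSwap_inr]
      exact natDegree_X_pow _
  rw [rows, det_apply_monic_eq_sign_mul finSumFinEquiv (blockSwap m n) l hp hpdeg q_monic
    q_natDegree, blocks, Matrix.det_fromBlocks_zero₂₁, Matrix.det_mul_column, sign_blockSwap]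
  push_cast
  ring

end FunctionalDeterminants

section Christoffel

variable {μ : Measure ℝ} {p : ℕ → ℝ[X]} {m n : ℕ}

theorem prod_prod_Ioi_sub_sq_eq_det_vandermonde_sq {R : Type*} [CommRing R] (x : Fin m → R) :
    (∏ i : Fin m, ∏ j ∈ Finset.Ioi i, (x i - x j)) ^ 2 = (Matrix.vandermonde x).det ^ 2 := by
  simp only [Matrix.det_vandermonde, ← Finset.prod_pow, sub_sq_comm]

theorem det_fromRows_integral_orthogonal
    (horth : ∀ k l : ℕ, k ≠ l → ∫ t, (p k).eval t * (p l).eval t ∂μ = 0)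
    (L : Fin n → Module.Dual ℝ ℝ[X]) :
    (Matrix.fromRows
        (Matrix.of fun (i : Fin m) (s : Fin m ⊕ Fin n) =>
          ∫ t, (p i).eval t * (p (finSumFinEquiv s : Fin (m + n))).eval t ∂μ)
        (Matrix.of fun j s => L j (p (finSumFinEquiv s : Fin (m + n))))).det =
      (∏ j ∈ Finset.range m, ∫ t, (p j).eval t ^ 2 ∂μ) *
        (Matrix.of fun i j : Fin n => L i (p (m + j))).det := by
  have blocks : Matrix.fromRows
      (Matrix.of fun (i : Fin m) (s : Fin m ⊕ Fin n) =>
        ∫ t, (p i).eval t * (p (finSumFinEquiv s : Fin (m + n))).eval t ∂μ)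
      (Matrix.of fun j s => L j (p (finSumFinEquiv s : Fin (m + n)))) =
      Matrix.fromBlocks (Matrix.diagonal fun i : Fin m => ∫ t, (p i).eval t ^ 2 ∂μ) 0
        (Matrix.of fun i (j : Fin m) => L i (p j))
        (Matrix.of fun i (j : Fin n) => L i (p (m + j))) := by
    ext (i | i) (k | k)
    · rcases eq_or_ne i k with rfl | hik
      · simp [sq]
      · simpa [Matrix.diagonal_apply_ne _ hik] using horth i k (Fin.val_injective.ne hik)
    · simpa using horth i (m + k) (by omega)
    · simp
    · simp
  rw [blocks, Matrix.det_fromBlocks_zero₁₂, Matrix.det_diagonal,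
    Fin.prod_univ_eq_prod_range fun j => ∫ t, (p j).eval t ^ 2 ∂μ]

theorem christoffel_integral_formula
    (hint : ∀ f : ℝ[X], Integrable (fun x => f.eval x) μ)
    (hmonic : ∀ k, (p k).Monic) (hdeg : ∀ k, (p k).natDegree = k)
    (horth : ∀ k l : ℕ, k ≠ l → ∫ t, (p k).eval t * (p l).eval t ∂μ = 0)
    {w : ℝ[X]} (hw : w.Monic) (hwdeg : w.natDegree = n) {L : Fin n → Module.Dual ℝ ℝ[X]}
    (hL : ∀ i q, L i (w * q) = 0) :
    (Matrix.of fun i j : Fin n => L i (X ^ (j : ℕ))).det *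
        ∫ x : Fin m → ℝ, (Matrix.vandermonde x).det ^ 2 * ∏ j, w.eval (x j)
          ∂(Measure.pi fun _ => μ) =
      (-1) ^ (m * n) * m.factorial * (∏ j ∈ Finset.range m, ∫ t, (p j).eval t ^ 2 ∂μ) *
        (Matrix.of fun i j : Fin n => L i (p (m + j))).det := by
  have : IsFiniteMeasure μ := (integrable_const_iff_isFiniteMeasure one_ne_zero).1 <| by
    simpa only [eval_one] using hint 1
  have sign_sq : ((-1 : ℝ) ^ (m * n)) * (-1) ^ (m * n) = 1 := by
    rw [← mul_pow, neg_one_mul, neg_neg, one_pow]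
  let e (s : Fin m ⊕ Fin n) : ℕ := (finSumFinEquiv s : Fin (m + n))
  have integrand (x : Fin m → ℝ) :
      (Matrix.of fun i j : Fin n => L i (X ^ (j : ℕ))).det *
          ((Matrix.vandermonde x).det ^ 2 * ∏ j, w.eval (x j)) =
        (-1) ^ (m * n) * ((Matrix.of fun i k : Fin m => (p k).eval (x i)).det *
          (Matrix.fromRows (Matrix.of fun i s => (p (e s)).eval (x i))
            (Matrix.of fun j s => L j (p (e s)))).det) := by
    rw [det_fromRows_eval_apply x L (fun s => hmonic (e s)) (fun s => hdeg (e s)) hw hwdeg hL,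
      ← Matrix.det_eval_matrixOfPolynomials_eq_det_vandermonde x (fun k => p k)
        (fun k => hdeg k) fun k => hmonic k]
    linear_combination (-(Matrix.vandermonde x).det ^ 2 * (∏ j, w.eval (x j)) *
      (Matrix.of fun i j : Fin n => L i (X ^ (j : ℕ))).det) *
        sign_sq
  have integrable_mul (f g : ℝ[X]) : Integrable (fun t => f.eval t * g.eval t) μ := by
    simpa only [eval_mul] using hint (f * g)
  rw [← integral_const_mul]
  simp_rw [integrand]
  rw [integral_const_mul, integral_det_mul_det_fromRows (fun (k : Fin m) t => (p k).eval t)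
    (fun s t => (p (e s)).eval t) _ fun _ _ => integrable_mul _ _, Fintype.card_fin,
    det_fromRows_integral_orthogonal horth L]
  ring

theorem selberg_integral_of_triangular
    (hint : ∀ f : ℝ[X], Integrable (fun x => f.eval x) μ)
    (hmonic : ∀ k, (p k).Monic) (hdeg : ∀ k, (p k).natDegree = k)
    (horth : ∀ k l : ℕ, k ≠ l → ∫ t, (p k).eval t * (p l).eval t ∂μ = 0)
    {a : ℕ → ℝ[X]} (ha : ∀ k, (a k).Monic) (hadeg : ∀ k, (a k).natDegree = k)
    {L : ℕ → Module.Dual ℝ ℝ[X]} (hL : ∀ i k, i < k → ∀ q, L i (a k * q) = 0)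
    (hfact : ∀ i, L i (a i) = i.factorial) (m n : ℕ) :
    ∫ x : Fin m → ℝ, (∏ i : Fin m, ∏ j ∈ Finset.Ioi i, (x i - x j)) ^ 2 *
        ∏ j, (a n).eval (x j) ∂(Measure.pi fun _ => μ) =
      ((-1) ^ (m * n) * m.factorial * ∏ j ∈ Finset.range m, ∫ t, (p j).eval t ^ 2 ∂μ) /
          (∏ j ∈ Finset.range n, (j.factorial : ℝ)) *
        (Matrix.of fun i j : Fin n => L i (p (m + j))).det := by
  have normalisation : (Matrix.of fun i j : Fin n => L i (X ^ (j : ℕ))).det =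
      ∏ j ∈ Finset.range n, (j.factorial : ℝ) := by
    simp only [det_apply_X_pow_eq_prod L ha hadeg fun i k hik => by simpa using hL i k hik 1, hfact]
  have h := christoffel_integral_formula (m := m) hint hmonic hdeg horth (ha n) (hadeg n)
    (L := fun i : Fin n => L i) fun i q => hL i n i.isLt q
  have hne : ∏ j ∈ Finset.range n, (j.factorial : ℝ) ≠ 0 := Finset.prod_ne_zero_iff.2 fun j _ =>
    Nat.cast_ne_zero.2 j.factorial_ne_zero
  simp only [prod_prod_Ioi_sub_sq_eq_det_vandermonde_sq]
  rw [div_mul_eq_mul_div, eq_div_iff hne, ← h, normalisation, mul_comm]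

end Christoffel

section Operators

variable {R : Type*} [CommRing R]

/-- The functional `f ↦ (T ^ i f)(u)` on polynomials. -/
noncomputable def evalPow (T : Module.End R R[X]) (u : R) (i : ℕ) : Module.Dual R R[X] :=
  leval u ∘ₗ T ^ i

theorem evalPow_apply (T : Module.End R R[X]) (u : R) (i : ℕ) (f : R[X]) :
    evalPow T u i f = (T^[i] f).eval u := by
  rw [evalPow, LinearMap.comp_apply, leval_apply, Module.End.pow_apply]

theorem evalPow_eq_iterate {T : Module.End R R[X]} {D : (R → R) → R → R}
    (hT : ∀ f : R[X], (fun t => (T f).eval t) = D fun t => f.eval t) (u : R) (i : ℕ) (f : R[X]) :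
    evalPow T u i f = D^[i] (fun t => f.eval t) u := by
  have h : Function.Semiconj (fun (f : R[X]) t => f.eval t) T D := hT
  rw [evalPow_apply]
  exact congrFun (h.iterate_right i f) u

theorem evalPow_derivative_X_sub_C_pow_mul (u : R) {i k : ℕ} (hik : i < k) (q : R[X]) :
    evalPow derivative u i ((X - C u) ^ k * q) = 0 := by
  rw [evalPow_apply, ← coe_aeval_eq_eval]
  exact aeval_iterate_derivative_of_lt _ k u (p' := q) (by simp) hik

theorem evalPow_derivative_X_sub_C_pow_self (u : R) (i : ℕ) :
    evalPow derivative u i ((X - C u) ^ i) = i.factorial := by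
  rw [evalPow_apply, ← coe_aeval_eq_eval,
    aeval_iterate_derivative_self _ i u (p' := 1) (by simp)]
  simp

theorem evalPow_derivative_eq_iteratedDeriv (u : ℝ) (i : ℕ) (f : ℝ[X]) :
    evalPow derivative u i f = iteratedDeriv i (fun t => f.eval t) u := by
  rw [iteratedDeriv_eq_iterate]
  exact evalPow_eq_iterate (fun f => funext fun t => f.deriv.symm) u i f

/-- The forward difference operator `f ↦ f(X + 1) - f` on polynomials. -/
noncomputable def polyFwdDiff (R : Type*) [CommRing R] : Module.End R R[X] := taylor 1 - 1

theorem evalPow_polyFwdDiff_eq_iterate (u : R) (i : ℕ) (f : R[X]) :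
    evalPow (polyFwdDiff R) u i f = (fwdDiff 1)^[i] (fun t => f.eval t) u :=
  evalPow_eq_iterate (fun f => funext fun t => by
    simp [polyFwdDiff, fwdDiff, taylor_eval]) u i f

/-- The falling factorial `(X - u)(X - u - 1) ⋯ (X - u - k + 1)`, the analogue of `(X - u) ^ k` for
the forward difference. -/
noncomputable def shiftedDescPochhammer (u : R) (k : ℕ) : R[X] :=
  (descPochhammer R k).comp (X - C u)

theorem eval_shiftedDescPochhammer (u y : R) (k : ℕ) :
    (shiftedDescPochhammer u k).eval y = (descPochhammer R k).eval (y - u) := by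
  simp [shiftedDescPochhammer]

theorem monic_shiftedDescPochhammer [IsDomain R] (u : R) (k : ℕ) :
    (shiftedDescPochhammer u k).Monic :=
  (monic_descPochhammer R k).comp_X_sub_C u

theorem natDegree_shiftedDescPochhammer [IsDomain R] (u : R) (k : ℕ) :
    (shiftedDescPochhammer u k).natDegree = k := by
  rw [shiftedDescPochhammer, natDegree_comp, descPochhammer_natDegree, natDegree_X_sub_C, mul_one]

theorem evalPow_polyFwdDiff_shiftedDescPochhammer_mul (u : R) {i k : ℕ} (hik : i < k) (q : R[X]) :
    evalPow (polyFwdDiff R) u i (shiftedDescPochhammer u k * q) = 0 := by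
  rw [evalPow_polyFwdDiff_eq_iterate, fwdDiff_iter_eq_sum_shift]
  refine Finset.sum_eq_zero fun j hj => ?_
  have root : (shiftedDescPochhammer u k).eval (u + j • 1) = 0 := by
    rw [eval_shiftedDescPochhammer, add_sub_cancel_left, nsmul_one]
    exact descPochhammer_eval_coe_nat_of_lt ((Finset.mem_range_succ_iff.1 hj).trans_lt hik)
  rw [eval_mul, root, zero_mul, smul_zero]

theorem evalPow_polyFwdDiff_shiftedDescPochhammer_self [IsDomain R] (u : R) (i : ℕ) :
    evalPow (polyFwdDiff R) u i (shiftedDescPochhammer u i) = i.factorial := by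
  have h := congrFun (shiftedDescPochhammer u i).fwdDiff_iter_degree_eq_factorial u
  rw [natDegree_shiftedDescPochhammer, (monic_shiftedDescPochhammer u i).leadingCoeff,
    one_smul] at h
  exact (evalPow_polyFwdDiff_eq_iterate u i _).trans h

theorem fdiff_eq_fwdDiff : fdiff = fwdDiff 1 := rfl

theorem poch_eq_eval_ascPochhammer (y : ℝ) (l : ℕ) : poch y l = (ascPochhammer ℝ l).eval y := by
  induction l with
  | zero => simp [poch]
  | succ l ih => rw [ascPochhammer_succ_eval, ← ih, poch, Finset.prod_range_succ, poch]

theorem poch_sub_sub_add_one (y u : ℝ) (n : ℕ) :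
    poch (y - u - n + 1) n = (shiftedDescPochhammer u n).eval y := by
  rw [poch_eq_eval_ascPochhammer, eval_shiftedDescPochhammer, descPochhammer_eval_eq_ascPochhammer]

end Operators

/-- Selberg-type integrals for the operators `d/dx` and `Δ`
evaluated via Wronskian/Casorati determinants of the monic orthogonal
polynomials. -/
theorem selberg_type_integrals_deriv_and_delta
    (μ : Measure ℝ) [SigmaFinite μ]
    (hint : ∀ f : Polynomial ℝ, Integrable (fun x => f.eval x) μ)
    (p : ℕ → Polynomial ℝ) (hmonic : ∀ k : ℕ, (p k).Monic)
    (hdeg : ∀ k : ℕ, (p k).natDegree = k)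
    (horth : ∀ k l : ℕ, k ≠ l → ∫ t, (p k).eval t * (p l).eval t ∂μ = 0)
    (u : ℝ) (n m : ℕ) (hm : 1 ≤ m) :
    ((∫ x : Fin m → ℝ,
        (∏ i : Fin m, ∏ j ∈ Finset.Ioi i, (x i - x j)) ^ 2 *
          ∏ j : Fin m, (x j - u) ^ n
        ∂(Measure.pi fun _ => μ))
      = ((-1 : ℝ) ^ (m * n) * (m.factorial : ℝ) *
            ∏ j ∈ Finset.range m, ∫ t, ((p j).eval t) ^ 2 ∂μ) /
          (∏ j ∈ Finset.range n, (j.factorial : ℝ)) *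
        Matrix.det (Matrix.of fun i j : Fin n =>
          iteratedDeriv (i : ℕ) (fun t => (p (m + (j : ℕ))).eval t) u))
    ∧ ((∫ x : Fin m → ℝ,
        (∏ i : Fin m, ∏ j ∈ Finset.Ioi i, (x i - x j)) ^ 2 *
          ∏ j : Fin m, poch (x j - u - n + 1) n
        ∂(Measure.pi fun _ => μ))
      = ((-1 : ℝ) ^ (m * n) * (m.factorial : ℝ) *
            ∏ j ∈ Finset.range m, ∫ t, ((p j).eval t) ^ 2 ∂μ) /
          (∏ j ∈ Finset.range n, (j.factorial : ℝ)) *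
        Matrix.det (Matrix.of fun i j : Fin n =>
          fdiff^[(i : ℕ)] (fun t => (p (m + (j : ℕ))).eval t) u)) := by
  constructor
  · have h := selberg_integral_of_triangular hint hmonic hdeg horth
      (fun k => (monic_X_sub_C u).pow k) (fun k => by simp)
      (fun _ _ => evalPow_derivative_X_sub_C_pow_mul u) (evalPow_derivative_X_sub_C_pow_self u) m n
    simpa only [eval_pow, eval_sub, eval_X, eval_C, evalPow_derivative_eq_iteratedDeriv] using h
  · have h := selberg_integral_of_triangular hint hmonic hdeg horth
      (monic_shiftedDescPochhammer u) (natDegree_shiftedDescPochhammer u)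
      (fun _ _ => evalPow_polyFwdDiff_shiftedDescPochhammer_mul u)
      (evalPow_polyFwdDiff_shiftedDescPochhammer_self u) m n
    simpa only [poch_sub_sub_add_one, evalPow_polyFwdDiff_eq_iterate, fdiff_eq_fwdDiff] using h
end
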